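/- (Strict passivity of the distributed tire friction dynamics.) Let θ ≥ 0, Σ : ℝ² → M₂(ℝ) continuous, T > 0, v : [0,T] → ℝ² continuous, and let z be a classical solution on [0,T] of the tire PDE with input v. Suppose Assumption 1 holds with constant ω > 0 and Assumption 2 holds for Σ. Define the storage function V(t) := (1/2)∫₀¹ z(ξ,t)ᵀ Q(ξ) z(ξ,t) dξ and the output F(t) := (𝒦₁ z(·,t)). Then for every t ∈ [0,T], ∫₀ᵗ F(s)ᵀ v(s) ds ≥ V(t) − V(0) + ω ∫₀ᵗ ∫₀¹ ‖z(ξ,s)‖² dξ ds. -/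

import Mathlib

open MeasureTheory Matrix Set

noncomputable section

attribute [local instance] Matrix.normedAddCommGroup Matrix.normedSpace

abbrev Vec2 := Fin 2 → ℝ
abbrev Mat2 := Matrix (Fin 2) (Fin 2) ℝ

/-- Nondimensional pressure distribution `p̄(ξ) = (a/(1-e^{-a})) e^{-aξ}`. -/
def pbar (a ξ : ℝ) : ℝ := a / (1 - Real.exp (-a)) * Real.exp (-a * ξ)

/-- The physical parameters of the single-track tire model. -/
structure TireParams where
  vx : ℝ
  L1 : ℝ
  L2 : ℝ
  Fz1 : ℝ
  Fz2 : ℝ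
  σ1 : ℝ
  σ2 : ℝ
  a1 : ℝ
  a2 : ℝ
  φ1 : ℝ
  φ2 : ℝ
  vx_pos : 0 < vx
  L1_pos : 0 < L1
  L2_pos : 0 < L2
  Fz1_pos : 0 < Fz1
  Fz2_pos : 0 < Fz2
  σ1_pos : 0 < σ1
  σ2_pos : 0 < σ2
  a1_pos : 0 < a1
  a2_pos : 0 < a2
  φ1_mem : φ1 ∈ Set.Ioc (0:ℝ) 1
  φ2_mem : φ2 ∈ Set.Ioc (0:ℝ) 1

namespace TireParams

variable (P : TireParams)

def ψ1 : ℝ := 1 - P.φ1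
def ψ2 : ℝ := 1 - P.φ2

def Λmat : Mat2 := Matrix.diagonal ![P.vx / P.L1, P.vx / P.L2]

def Hmat : Mat2 := (2:ℝ) • Matrix.diagonal ![P.φ1, P.φ2]

def K1 (ξ : ℝ) : Mat2 :=
  Matrix.diagonal ![P.Fz1 * P.σ1 * pbar P.a1 ξ, P.Fz2 * P.σ2 * pbar P.a2 ξ]

def K2 (ξ : ℝ) : Mat2 :=
  -Matrix.diagonal ![P.ψ1 * pbar P.a1 ξ, P.ψ2 * pbar P.a2 ξ]

def K3 (ξ : ℝ) : Mat2 :=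
  -P.vx • Matrix.diagonal ![P.ψ1 / P.L1 * deriv (pbar P.a1) ξ, P.ψ2 / P.L2 * deriv (pbar P.a2) ξ]

def K4 : Mat2 :=
  P.vx • Matrix.diagonal ![P.ψ1 / P.L1 * pbar P.a1 1, P.ψ2 / P.L2 * pbar P.a2 1]

def Q (ξ : ℝ) : Mat2 := P.K1 ξ * (P.Hmat)⁻¹

/-- `(𝒦ζ) = ∫₀¹ K(ξ) ζ(ξ) dξ`. -/
def Kop (K : ℝ → Mat2) (ζ : ℝ → Vec2) : Vec2 := ∫ ξ in (0:ℝ)..1, (K ξ).mulVec (ζ ξ)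

def K1op (ζ : ℝ → Vec2) : Vec2 := Kop P.K1 ζ

def K2op (ζ : ℝ → Vec2) : Vec2 := Kop P.K2 ζ

/-- `(𝒦₃ζ) = ∫₀¹ K₃(ξ)ζ(ξ)dξ + K₄ ζ(1)`. -/
def K3op (ζ : ℝ → Vec2) : Vec2 := Kop P.K3 ζ + (P.K4).mulVec (ζ 1)

/-- `(𝒜ζ)(ξ) = -Λ ζ'(ξ) + (𝒦₃ζ)`, expressed through a given derivative `ζ'`. -/
def Aop (ζ ζ' : ℝ → Vec2) (ξ : ℝ) : Vec2 := -(P.Λmat).mulVec (ζ' ξ) + P.K3op ζ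

end TireParams

/-- `ζ` is C¹ on `[0,1]` with derivative `ζ'`. -/
def IsC1On01 (ζ ζ' : ℝ → Vec2) : Prop :=
  (∀ ξ ∈ Icc (0:ℝ) 1, HasDerivWithinAt ζ (ζ' ξ) (Icc (0:ℝ) 1) ξ) ∧
    ContinuousOn ζ' (Icc (0:ℝ) 1)

/-- Square integrability on `(0,1)`. -/
def SqIntegrableOn01 (ζ : ℝ → Vec2) : Prop :=
  Measurable ζ ∧ IntervalIntegrable (fun ξ => ∑ i, (ζ ξ i) ^ 2) volume 0 1

/-- Assumption 1 (strict dissipativity of `𝒜`). -/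
def Assumption1 (P : TireParams) (ω : ℝ) : Prop :=
  ∀ ζ ζ' : ℝ → Vec2, IsC1On01 ζ ζ' → ζ 0 = 0 →
    (∫ ξ in (0:ℝ)..1, P.Aop ζ ζ' ξ ⬝ᵥ (P.Q ξ).mulVec (ζ ξ)) ≤
      -ω * ∫ ξ in (0:ℝ)..1, ∑ i, (ζ ξ i) ^ 2

/-- Assumption 2 (dissipativity of the source `Σ`). -/
def Assumption2 (P : TireParams) (S : Vec2 → Mat2) : Prop :=
  ∀ y : Vec2, ∀ ζ : ℝ → Vec2, SqIntegrableOn01 ζ →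
    (∫ ξ in (0:ℝ)..1, ζ ξ ⬝ᵥ (P.Q ξ).mulVec ((S y).mulVec (ζ ξ + P.K2op ζ))) ≤ 0

/-- `z` (with partial derivatives `zξ`, `zt`) is a classical solution on `[0,T]` of the tire
PDE with input `v`: `∂z/∂t + Λ ∂z/∂ξ = θΣ(v(t))[z + 𝒦₂z] + 𝒦₃z + Hv(t)`, `z(0,t) = 0`. -/
def IsClassicalSolution (P : TireParams) (θ : ℝ) (S : Vec2 → Mat2) (T : ℝ)
    (v : ℝ → Vec2) (z zξ zt : ℝ → ℝ → Vec2) : Prop :=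
  (∀ t ∈ Icc (0:ℝ) T, ∀ ξ ∈ Icc (0:ℝ) 1,
      HasDerivWithinAt (fun s => z s t) (zξ ξ t) (Icc (0:ℝ) 1) ξ) ∧
  (∀ ξ ∈ Icc (0:ℝ) 1, ∀ t ∈ Icc (0:ℝ) T,
      HasDerivWithinAt (fun s => z ξ s) (zt ξ t) (Icc (0:ℝ) T) t) ∧
  ContinuousOn (fun p : ℝ × ℝ => z p.1 p.2) (Icc (0:ℝ) 1 ×ˢ Icc (0:ℝ) T) ∧
  ContinuousOn (fun p : ℝ × ℝ => zξ p.1 p.2) (Icc (0:ℝ) 1 ×ˢ Icc (0:ℝ) T) ∧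
  ContinuousOn (fun p : ℝ × ℝ => zt p.1 p.2) (Icc (0:ℝ) 1 ×ˢ Icc (0:ℝ) T) ∧
  (∀ ξ ∈ Ioo (0:ℝ) 1, ∀ t ∈ Ioo (0:ℝ) T,
      zt ξ t + (P.Λmat).mulVec (zξ ξ t) =
        θ • (S (v t)).mulVec (z ξ t + P.K2op (fun s => z s t)) +
          P.K3op (fun s => z s t) + (P.Hmat).mulVec (v t)) ∧
  (∀ t ∈ Icc (0:ℝ) T, z 0 t = 0)

/-- The storage function `V(t) = ½∫₀¹ z(ξ,t)ᵀ Q(ξ) z(ξ,t) dξ`. -/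
def storage (P : TireParams) (z : ℝ → ℝ → Vec2) (t : ℝ) : ℝ :=
  (1/2) * ∫ ξ in (0:ℝ)..1, z ξ t ⬝ᵥ (P.Q ξ).mulVec (z ξ t)

/-- The output `F(t) = (𝒦₁ z(·,t))`. -/
def outputF (P : TireParams) (z : ℝ → ℝ → Vec2) (t : ℝ) : Vec2 :=
  P.K1op (fun s => z s t)

lemma pbar_continuous (a : ℝ) : Continuous (pbar a) := by
  unfold pbar; fun_prop

def qvec (P : TireParams) (ξ : ℝ) : Vec2 :=
  ![P.Fz1 * P.σ1 * pbar P.a1 ξ / (2 * P.φ1), P.Fz2 * P.σ2 * pbar P.a2 ξ / (2 * P.φ2)]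

lemma qvec_continuous (P : TireParams) : Continuous (qvec P) := by
  have h1 := pbar_continuous P.a1
  have h2 := pbar_continuous P.a2
  refine continuous_pi fun i => ?_
  fin_cases i
  · simp [qvec]; fun_prop
  · simp [qvec]; fun_prop

lemma Q_eq (P : TireParams) (ξ : ℝ) : P.Q ξ = Matrix.diagonal (qvec P ξ) := by
  have h1 : P.φ1 ≠ 0 := P.φ1_mem.1.ne'
  have h2 : P.φ2 ≠ 0 := P.φ2_mem.1.ne'
  have hH : (P.Hmat)⁻¹ = Matrix.diagonal ![1 / (2 * P.φ1), 1 / (2 * P.φ2)] := by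
    apply Matrix.inv_eq_right_inv
    unfold TireParams.Hmat
    ext i j
    fin_cases i <;> fin_cases j <;> simp [Matrix.mul_apply, Fin.sum_univ_two] <;> field_simp
  unfold TireParams.Q TireParams.K1
  rw [hH, Matrix.diagonal_mul_diagonal]
  congr 1
  ext i
  fin_cases i <;> simp [qvec] <;> field_simp

lemma dot_Q (P : TireParams) (ξ : ℝ) (x y : Vec2) :
    x ⬝ᵥ (P.Q ξ).mulVec y = ∑ i, x i * (qvec P ξ i * y i) := by
  rw [Q_eq]
  simp [dotProduct, Matrix.mulVec_diagonal]

lemma Q_continuous (P : TireParams) : Continuous P.Q := by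
  have : P.Q = fun ξ => Matrix.diagonal (qvec P ξ) := funext (Q_eq P)
  rw [this]
  exact (qvec_continuous P).matrix_diagonal

lemma K1_continuous (P : TireParams) : Continuous P.K1 := by
  have h1 := pbar_continuous P.a1
  have h2 := pbar_continuous P.a2
  unfold TireParams.K1
  refine Continuous.matrix_diagonal (continuous_pi fun i => ?_)
  fin_cases i
  · simp; fun_prop
  · simp; fun_prop

lemma H_dot_Q (P : TireParams) (ξ : ℝ) (x y : Vec2) :
    (P.Hmat).mulVec y ⬝ᵥ (P.Q ξ).mulVec x = (P.K1 ξ).mulVec x ⬝ᵥ y := by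
  have h1 : P.φ1 ≠ 0 := P.φ1_mem.1.ne'
  have h2 : P.φ2 ≠ 0 := P.φ2_mem.1.ne'
  rw [dot_Q]
  simp [TireParams.Hmat, TireParams.K1, Matrix.smul_mulVec, Matrix.mulVec_diagonal, dotProduct,
    Fin.sum_univ_two, qvec]
  field_simp

lemma Q_symm (P : TireParams) (ξ : ℝ) (x y : Vec2) :
    x ⬝ᵥ (P.Q ξ).mulVec y = y ⬝ᵥ (P.Q ξ).mulVec x := by
  rw [dot_Q, dot_Q]
  exact Finset.sum_congr rfl fun i _ => by ring

lemma K1op_dot (P : TireParams) (x : ℝ → Vec2) (hx : Continuous x) (y : Vec2) :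
    P.K1op x ⬝ᵥ y = ∫ ξ in (0:ℝ)..1, (P.K1 ξ).mulVec (x ξ) ⬝ᵥ y := by
  have hc : Continuous fun ξ => (P.K1 ξ).mulVec (x ξ) := (K1_continuous P).matrix_mulVec hx
  let L : Vec2 →L[ℝ] ℝ := ∑ i, y i • ContinuousLinearMap.proj (R := ℝ) (φ := fun _ : Fin 2 => ℝ) i
  have hL : ∀ w : Vec2, L w = w ⬝ᵥ y := by
    intro w
    simp [L, dotProduct, Fin.sum_univ_two, mul_comm]
  have := L.intervalIntegral_comp_comm (hc.intervalIntegrable (μ := volume) 0 1)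
  simp only [hL] at this
  rw [this]
  rfl

lemma Kop_congr (K : ℝ → Mat2) (x y : ℝ → Vec2) (h : ∀ ξ ∈ Icc (0:ℝ) 1, x ξ = y ξ) :
    TireParams.Kop K x = TireParams.Kop K y := by
  unfold TireParams.Kop
  refine intervalIntegral.integral_congr fun ξ hξ => ?_
  rw [uIcc_of_le zero_le_one] at hξ
  simp only [h ξ hξ]

lemma key (P : TireParams) (θ : ℝ) (hθ : 0 ≤ θ) (S : Vec2 → Mat2) (ω : ℝ)
    (h1 : Assumption1 P ω) (h2 : Assumption2 P S) (x x' xt : ℝ → Vec2)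
    (hx : Continuous x) (hx' : Continuous x')
    (hC : IsC1On01 x x') (h0 : x 0 = 0) (y : Vec2)
    (pde : ∀ ξ ∈ Ioo (0:ℝ) 1, xt ξ + (P.Λmat).mulVec (x' ξ) =
        θ • (S y).mulVec (x ξ + P.K2op x) + P.K3op x + (P.Hmat).mulVec y) :
    (∫ ξ in (0:ℝ)..1, xt ξ ⬝ᵥ (P.Q ξ).mulVec (x ξ)) ≤
      P.K1op x ⬝ᵥ y - ω * ∫ ξ in (0:ℝ)..1, ∑ i, (x ξ i) ^ 2 := by
  have hQ := Q_continuous P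
  have hK := K1_continuous P
  have hQx : Continuous fun ξ => (P.Q ξ).mulVec (x ξ) := hQ.matrix_mulVec hx
  have a1 := h1 x x' hC h0
  have a2 := h2 y x ⟨hx.measurable, Continuous.intervalIntegrable (by fun_prop) _ _⟩
  have c1 : Continuous fun ξ => P.Aop x x' ξ ⬝ᵥ (P.Q ξ).mulVec (x ξ) := by
    unfold TireParams.Aop
    exact (((continuous_const.matrix_mulVec hx').neg).add continuous_const).dotProduct hQx
  have c2 : Continuous fun ξ =>
      x ξ ⬝ᵥ (P.Q ξ).mulVec ((S y).mulVec (x ξ + P.K2op x)) :=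
    hx.dotProduct (hQ.matrix_mulVec (continuous_const.matrix_mulVec (hx.add continuous_const)))
  have c3 : Continuous fun ξ => (P.K1 ξ).mulVec (x ξ) ⬝ᵥ y :=
    (hK.matrix_mulVec hx).dotProduct continuous_const
  have e : (∫ ξ in (0:ℝ)..1, xt ξ ⬝ᵥ (P.Q ξ).mulVec (x ξ)) =
      ∫ ξ in (0:ℝ)..1, (P.Aop x x' ξ ⬝ᵥ (P.Q ξ).mulVec (x ξ) +
        θ * (x ξ ⬝ᵥ (P.Q ξ).mulVec ((S y).mulVec (x ξ + P.K2op x))) +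
        (P.K1 ξ).mulVec (x ξ) ⬝ᵥ y) := by
    rw [intervalIntegral.integral_of_le zero_le_one, intervalIntegral.integral_of_le zero_le_one,
      integral_Ioc_eq_integral_Ioo, integral_Ioc_eq_integral_Ioo]
    refine setIntegral_congr_fun measurableSet_Ioo fun ξ hξ => ?_
    have hp : xt ξ = P.Aop x x' ξ + θ • (S y).mulVec (x ξ + P.K2op x) + (P.Hmat).mulVec y := by
      rw [eq_sub_of_add_eq (pde ξ hξ)]
      unfold TireParams.Aop
      abel
    rw [hp, add_dotProduct, add_dotProduct, H_dot_Q, smul_dotProduct, smul_eq_mul,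
      Q_symm P ξ (x ξ)]
  rw [e, intervalIntegral.integral_add, intervalIntegral.integral_add,
    intervalIntegral.integral_const_mul, ← K1op_dot P x hx]
  · have := mul_nonpos_of_nonneg_of_nonpos hθ a2
    linarith
  · exact c1.intervalIntegrable _ _
  · exact (c2.const_mul θ).intervalIntegrable _ _
  · exact (c1.add (c2.const_mul θ)).intervalIntegrable _ _
  · exact c3.intervalIntegrable _ _

/-- clamp to `[0,b]` -/
def clampTo (b x : ℝ) : ℝ := max 0 (min b x)

lemma clampTo_cont (b : ℝ) : Continuous (clampTo b) := by unfold clampTo; fun_prop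

lemma clampTo_mem {b : ℝ} (hb : 0 ≤ b) (x : ℝ) : clampTo b x ∈ Icc 0 b :=
  ⟨le_max_left _ _, max_le hb (min_le_left _ _)⟩

lemma clampTo_eq {b x : ℝ} (hx : x ∈ Icc 0 b) : clampTo b x = x := by
  unfold clampTo; rw [min_eq_right hx.2, max_eq_right hx.1]

lemma clamp_cont2 {T : ℝ} (hT : 0 ≤ T) (z : ℝ → ℝ → Vec2)
    (hz : ContinuousOn (fun p : ℝ × ℝ => z p.1 p.2) (Icc (0:ℝ) 1 ×ˢ Icc (0:ℝ) T)) :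
    Continuous fun p : ℝ × ℝ => z (clampTo 1 p.1) (clampTo T p.2) := by
  have h1 := clampTo_cont 1
  have h2 := clampTo_cont T
  exact hz.comp_continuous (f := fun p : ℝ × ℝ => (clampTo 1 p.1, clampTo T p.2)) (by fun_prop)
    fun p => ⟨clampTo_mem zero_le_one _, clampTo_mem hT _⟩

/-- strict passivity of the distributed tire friction dynamics:
`∫₀ᵗ F(s)ᵀv(s) ds ≥ V(t) − V(0) + ω ∫₀ᵗ∫₀¹ ‖z(ξ,s)‖² dξ ds` for every `t ∈ [0,T]`. -/
theorem statement3 (P : TireParams) (θ : ℝ) (hθ : 0 ≤ θ)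
    (S : Vec2 → Mat2) (hS : Continuous S)
    (T : ℝ) (hT : 0 < T) (v : ℝ → Vec2) (hv : ContinuousOn v (Icc (0:ℝ) T))
    (z zξ zt : ℝ → ℝ → Vec2) (hz : IsClassicalSolution P θ S T v z zξ zt)
    (ω : ℝ) (hω : 0 < ω) (h1 : Assumption1 P ω) (h2 : Assumption2 P S) :
    ∀ t ∈ Icc (0:ℝ) T,
      (∫ s in (0:ℝ)..t, outputF P z s ⬝ᵥ v s) ≥
        storage P z t - storage P z 0 +
          ω * ∫ s in (0:ℝ)..t, ∫ ξ in (0:ℝ)..1, ∑ i, (z ξ s i) ^ 2 := by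
  obtain ⟨hdξ, hdt, cz, czξ, czt, pde, hz0⟩ := hz
  have hT0 := hT.le
  have CZ := clamp_cont2 hT0 z cz
  have CZξ := clamp_cont2 hT0 zξ czξ
  have CZt := clamp_cont2 hT0 zt czt
  have hQ := Q_continuous P
  have hK := K1_continuous P
  have h01 : uIcc (0:ℝ) 1 = Icc 0 1 := uIcc_of_le zero_le_one
  have mk : ∀ s : ℝ, Continuous fun ξ : ℝ => (ξ, s) := fun s => by fun_prop
  intro t ht
  have htT : ∀ s ∈ Icc 0 t, s ∈ Icc 0 T := fun s hs => ⟨hs.1, hs.2.trans ht.2⟩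
  -- integrand of the rate
  let G : ℝ → ℝ → ℝ := fun s ξ =>
    zt (clampTo 1 ξ) (clampTo T s) ⬝ᵥ (P.Q ξ).mulVec (z (clampTo 1 ξ) (clampTo T s))
  have CG : Continuous (Function.uncurry G) := by
    have hsw : Continuous fun p : ℝ × ℝ => (p.2, p.1) := by fun_prop
    exact (CZt.comp hsw).dotProduct ((hQ.comp continuous_snd).matrix_mulVec (CZ.comp hsw))
  -- the three continuous functions of time
  let D : ℝ → ℝ := fun s => ∫ ξ in (0:ℝ)..1, G s ξ
  let N : ℝ → ℝ := fun s => ∫ ξ in (0:ℝ)..1, ∑ i, (z (clampTo 1 ξ) (clampTo T s) i) ^ 2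
  let F : ℝ → ℝ := fun s =>
    ∫ ξ in (0:ℝ)..1, (P.K1 ξ).mulVec (z (clampTo 1 ξ) (clampTo T s)) ⬝ᵥ v (clampTo T s)
  have CD : Continuous D :=
    intervalIntegral.continuous_parametric_intervalIntegral_of_continuous' CG 0 1
  have hsw : Continuous fun p : ℝ × ℝ => (p.2, p.1) := by fun_prop
  have CZs := CZ.comp hsw
  have CN : Continuous N := by
    refine intervalIntegral.continuous_parametric_intervalIntegral_of_continuous' ?_ 0 1
    refine continuous_finsetSum _ fun i _ => ?_
    exact ((continuous_apply i).comp CZs).pow 2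
  have Cv : Continuous fun s => v (clampTo T s) :=
    hv.comp_continuous (clampTo_cont T) fun s => clampTo_mem hT0 s
  have CF : Continuous F := by
    refine intervalIntegral.continuous_parametric_intervalIntegral_of_continuous' ?_ 0 1
    exact ((hK.comp continuous_snd).matrix_mulVec CZs).dotProduct (Cv.comp continuous_fst)
  have eF : (∫ s in (0:ℝ)..t, outputF P z s ⬝ᵥ v s) = ∫ s in (0:ℝ)..t, F s := by
    refine intervalIntegral.integral_congr fun s hs => ?_
    rw [uIcc_of_le ht.1] at hs
    have hs' := clampTo_eq (htT s hs)
    have : outputF P z s = P.K1op fun ξ => z (clampTo 1 ξ) (clampTo T s) := by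
      refine Kop_congr _ _ _ fun ξ hξ => ?_
      simp only [hs', clampTo_eq hξ]
    simp only [F]
    have cx : Continuous fun ξ => z (clampTo 1 ξ) (clampTo T s) := CZ.comp (mk s)
    rw [this, K1op_dot P _ cx, hs']
  have eN : (∫ s in (0:ℝ)..t, ∫ ξ in (0:ℝ)..1, ∑ i, (z ξ s i) ^ 2) = ∫ s in (0:ℝ)..t, N s := by
    refine intervalIntegral.integral_congr fun s hs => ?_
    rw [uIcc_of_le ht.1] at hs
    refine intervalIntegral.integral_congr fun ξ hξ => ?_
    rw [h01] at hξ
    simp only [clampTo_eq (htT s hs), clampTo_eq hξ]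
  -- pointwise dissipation inequality
  have hle : ∀ s ∈ Ioo 0 t, D s ≤ F s - ω * N s := by
    intro s hs
    have hsT : s ∈ Ioo 0 T := ⟨hs.1, hs.2.trans_le ht.2⟩
    have hsI : s ∈ Icc 0 T := Ioo_subset_Icc_self hsT
    have hs' := clampTo_eq hsI
    have cx : Continuous fun ξ => z (clampTo 1 ξ) (clampTo T s) := CZ.comp (mk s)
    have cx' : Continuous fun ξ => zξ (clampTo 1 ξ) (clampTo T s) := CZξ.comp (mk s)
    have hk2 : P.K2op (fun ξ => z (clampTo 1 ξ) (clampTo T s)) = P.K2op fun ξ => z ξ s :=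
      Kop_congr _ _ _ fun ξ hξ => by simp only [hs', clampTo_eq hξ]
    have hk3 : P.K3op (fun ξ => z (clampTo 1 ξ) (clampTo T s)) = P.K3op fun ξ => z ξ s := by
      unfold TireParams.K3op
      rw [Kop_congr P.K3 _ (fun ξ => z ξ s) fun ξ hξ => by simp only [hs', clampTo_eq hξ]]
      simp only [hs', clampTo_eq (right_mem_Icc.2 (zero_le_one (α := ℝ)))]
    have := key P θ hθ S ω h1 h2 (fun ξ => z (clampTo 1 ξ) (clampTo T s))
      (fun ξ => zξ (clampTo 1 ξ) (clampTo T s)) (fun ξ => zt (clampTo 1 ξ) (clampTo T s))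
      cx cx' ?_ ?_ (v (clampTo T s)) ?_
    · rw [K1op_dot P _ cx] at this
      exact this
    · refine ⟨fun ξ hξ => ?_, cx'.continuousOn⟩
      simp only [hs', clampTo_eq hξ]
      refine (hdξ s hsI ξ hξ).congr (fun η hη => ?_) ?_
      · simp only [clampTo_eq hη]
      · simp only [clampTo_eq hξ]
    · simp only [clampTo_eq (left_mem_Icc.2 (zero_le_one (α := ℝ)))]
      exact hz0 _ (clampTo_mem hT0 _)
    · intro ξ hξ
      rw [hk2, hk3]
      simp only [hs', clampTo_eq (Ioo_subset_Icc_self hξ)]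
      exact pde ξ hξ s hsT
  have hint : (∫ s in (0:ℝ)..t, D s) ≤ ∫ s in (0:ℝ)..t, (F s - ω * N s) :=
    intervalIntegral.integral_mono_on_of_le_Ioo ht.1 (CD.intervalIntegrable _ _)
      ((CF.sub (CN.const_mul ω)).intervalIntegrable _ _) hle
  rw [intervalIntegral.integral_sub (CF.intervalIntegrable _ _)
    ((CN.const_mul ω).intervalIntegrable _ _), intervalIntegral.integral_const_mul] at hint
  -- the storage balance
  have hV : storage P z t - storage P z 0 = ∫ s in (0:ℝ)..t, D s := by
    have hswap : (∫ s in (0:ℝ)..t, D s) = ∫ ξ in (0:ℝ)..1, ∫ s in (0:ℝ)..t, G s ξ := by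
      simp only [D, intervalIntegral.integral_of_le ht.1,
        intervalIntegral.integral_of_le (zero_le_one (α := ℝ))]
      refine integral_integral_swap ?_
      rw [Measure.prod_restrict]
      exact (CG.continuousOn.integrableOn_compact
        (isCompact_Icc.prod isCompact_Icc)).mono_set
          (prod_mono Ioc_subset_Icc_self Ioc_subset_Icc_self)
    have hftc : ∀ ξ ∈ Icc (0:ℝ) 1, (∫ s in (0:ℝ)..t, G s ξ) =
        (1/2) * (z ξ t ⬝ᵥ (P.Q ξ).mulVec (z ξ t)) - (1/2) * (z ξ 0 ⬝ᵥ (P.Q ξ).mulVec (z ξ 0)) := by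
      intro ξ hξ
      have hder : ∀ s ∈ Icc 0 t, HasDerivWithinAt
          (fun s => (1/2) * (z ξ s ⬝ᵥ (P.Q ξ).mulVec (z ξ s))) (G s ξ) (Icc 0 T) s := by
        intro s hs
        have hd := hdt ξ hξ s (htT s hs)
        rw [hasDerivWithinAt_pi] at hd
        have := (HasDerivWithinAt.fun_sum (u := Finset.univ) fun i _ =>
          (hd i).mul ((hd i).const_mul (qvec P ξ i))).const_mul (1/2)
        simp only [dot_Q, G, clampTo_eq hξ, clampTo_eq (htT s hs)]
        refine this.congr_deriv ?_
        rw [Finset.mul_sum]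
        exact Finset.sum_congr rfl fun i _ => by ring
      refine intervalIntegral.integral_eq_sub_of_hasDerivAt_of_le ht.1
        (f := fun s => (1/2) * (z ξ s ⬝ᵥ (P.Q ξ).mulVec (z ξ s))) ?_ ?_ ?_
      · exact fun s hs => ((hder s hs).continuousWithinAt).mono fun r hr => htT r hr
      · intro s hs
        exact (hder s (Ioo_subset_Icc_self hs)).hasDerivAt
          (Icc_mem_nhds hs.1 (hs.2.trans_le ht.2))
      · have : Continuous fun s => G s ξ := CG.comp (by fun_prop : Continuous fun s : ℝ => (s, ξ))
        exact this.intervalIntegrable _ _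
    have hcz : ∀ r ∈ Icc (0:ℝ) T, IntervalIntegrable
        (fun ξ => (1/2) * (z ξ r ⬝ᵥ (P.Q ξ).mulVec (z ξ r))) volume 0 1 := by
      intro r hr
      have cx : Continuous fun ξ => z (clampTo 1 ξ) (clampTo T r) := CZ.comp (mk r)
      have cc := continuous_const (y := (1/2 : ℝ)).mul (cx.dotProduct (hQ.matrix_mulVec cx))
      refine ContinuousOn.intervalIntegrable (cc.continuousOn.congr fun ξ hξ => ?_)
      rw [h01] at hξ
      simp only [Pi.mul_apply, clampTo_eq hξ, clampTo_eq hr]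
    rw [hswap, intervalIntegral.integral_congr (g := fun ξ =>
      (1/2) * (z ξ t ⬝ᵥ (P.Q ξ).mulVec (z ξ t)) - (1/2) * (z ξ 0 ⬝ᵥ (P.Q ξ).mulVec (z ξ 0)))
      (fun ξ hξ => hftc ξ (h01 ▸ hξ)),
      intervalIntegral.integral_sub (hcz t ht) (hcz 0 ⟨le_rfl, hT0⟩),
      intervalIntegral.integral_const_mul, intervalIntegral.integral_const_mul]
    rfl
  rw [eF, eN, hV]
  linarith
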